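/- Let λ ∈ ℝ and define H_λ(x) = (24 − λx) ln x + [(9λ − 172)x + 12λ − 256] ln(x+1) + 4[(37 − 2λ)x − 3λ + 61] ln(x+2) and G_λ(x) = ln Γ(x) + x + 1/(12(1+x)²) + (λ − 48)/(48(1+x)) + H_λ(x)/24. Then G_λ is completely monotonic on (0,∞) if and only if λ ≤ 0. -/

import Mathlib

/-- A function is completely monotonic on a set `s` if it has derivatives of all
orders there and `(-1)^n f^(n)(x) ≥ 0` for all `x ∈ s` and all `n ≥ 0`. -/
def CompletelyMonotonicOn (f : ℝ → ℝ) (s : Set ℝ) : Prop :=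
  ContDiffOn ℝ (⊤ : ℕ∞) f s ∧
    ∀ n : ℕ, ∀ x ∈ s, 0 ≤ (-1 : ℝ) ^ n * iteratedDerivWithin n f s x

/-- `H_λ(x)` as in the paper. -/
noncomputable def H (lam x : ℝ) : ℝ :=
  (24 - lam * x) * Real.log x +
    ((9 * lam - 172) * x + 12 * lam - 256) * Real.log (x + 1) +
    4 * ((37 - 2 * lam) * x - 3 * lam + 61) * Real.log (x + 2)

/-- `G_λ(x)` as in the paper. -/
noncomputable def G (lam x : ℝ) : ℝ :=
  Real.log (Real.Gamma x) + x + 1 / (12 * (1 + x) ^ 2) +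
    (lam - 48) / (48 * (1 + x)) + H lam x / 24

/-!
A function with a nonnegative limit at infinity whose second derivative is completely monotonic is
itself completely monotonic. Write `G_λ = G_0 - (λ / 24) κ` with `κ` elementary. The second
derivative of `κ` is the Laplace transform of a nonnegative density, so `κ` is completely
monotonic. The functional equation of `Γ` makes `G_0(x) - G_0(x + 1)` elementary, and it is
completely monotonic for the same reason; summing its shifts, and using Stirling's formula to see
that `G_0(x + n)` tends to a positive constant, gives complete monotonicity of `G_0`, hence of
`G_λ` for `λ ≤ 0`. Conversely, near `0` the function `G_λ` is differentiable up to the term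
`-(λ / 24) x log x`, and for `λ > 0` the slope of that term tends to `+∞`, so `G_λ` cannot decrease.
-/

open Filter MeasureTheory ProbabilityTheory Set Topology
open scoped ContDiff

namespace CompletelyMonotonicOn

variable {f g : ℝ → ℝ} {s t : Set ℝ}

lemma contDiffOn (hf : CompletelyMonotonicOn f s) : ContDiffOn ℝ ∞ f s := hf.1

lemma nonneg (hf : CompletelyMonotonicOn f s) {x : ℝ} (hx : x ∈ s) : 0 ≤ f x := by
  simpa using hf.2 0 x hx

lemma derivWithin_nonpos (hf : CompletelyMonotonicOn f s) {x : ℝ} (hx : x ∈ s) :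
    derivWithin f s x ≤ 0 := by
  simpa [iteratedDerivWithin_one] using hf.2 1 x hx

lemma congr (hf : CompletelyMonotonicOn f s) (hfg : EqOn g f s) : CompletelyMonotonicOn g s :=
  ⟨hf.contDiffOn.congr hfg, fun n x hx ↦ by
    rw [iteratedDerivWithin_congr hfg hx]
    exact hf.2 n x hx⟩

lemma const {c : ℝ} (hc : 0 ≤ c) : CompletelyMonotonicOn (fun _ ↦ c) s := by
  refine ⟨contDiffOn_const, fun n x _ ↦ ?_⟩
  rcases n with _ | n
  · simpa using hc
  · simp [iteratedDerivWithin_const]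

lemma add (hs : UniqueDiffOn ℝ s) (hf : CompletelyMonotonicOn f s)
    (hg : CompletelyMonotonicOn g s) : CompletelyMonotonicOn (fun x ↦ f x + g x) s := by
  refine ⟨hf.contDiffOn.add hg.contDiffOn, fun n x hx ↦ ?_⟩
  have hn : (n : ℕ∞ω) ≤ ∞ := mod_cast le_top
  rw [iteratedDerivWithin_fun_add hx hs ((hf.contDiffOn x hx).of_le hn)
    ((hg.contDiffOn x hx).of_le hn), mul_add]
  exact add_nonneg (hf.2 n x hx) (hg.2 n x hx)

lemma const_mul {c : ℝ} (hc : 0 ≤ c) (hf : CompletelyMonotonicOn f s) :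
    CompletelyMonotonicOn (fun x ↦ c * f x) s := by
  refine ⟨contDiffOn_const.mul hf.contDiffOn, fun n x hx ↦ ?_⟩
  rw [iteratedDerivWithin_const_mul_field, mul_left_comm]
  exact mul_nonneg hc (hf.2 n x hx)

lemma comp_add_const {a : ℝ} (hs : IsOpen s) (ht : IsOpen t) (hf : CompletelyMonotonicOn f s)
    (hst : MapsTo (· + a) t s) : CompletelyMonotonicOn (fun x ↦ f (x + a)) t := by
  refine ⟨hf.contDiffOn.comp (contDiff_id.add contDiff_const).contDiffOn hst, fun n x hx ↦ ?_⟩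
  rw [iteratedDerivWithin_of_isOpen ht hx, iteratedDeriv_comp_add_const]
  simpa only [iteratedDerivWithin_of_isOpen hs (hst hx)] using hf.2 n _ (hst hx)

lemma neg_derivWithin (hs : UniqueDiffOn ℝ s) (hf : CompletelyMonotonicOn f s) :
    CompletelyMonotonicOn (fun x ↦ -derivWithin f s x) s := by
  refine ⟨((contDiffOn_infty_iff_derivWithin hs).1 hf.contDiffOn).2.neg, fun n x hx ↦ ?_⟩
  have h := hf.2 (n + 1) x hx
  rw [iteratedDerivWithin_succ', pow_succ] at h
  rw [iteratedDerivWithin_fun_neg]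
  linarith

lemma of_hasDerivAt_neg (hs : IsOpen s) (hf : ∀ x ∈ s, 0 ≤ f x)
    (hfg : ∀ x ∈ s, HasDerivAt f (-g x) x) (hg : CompletelyMonotonicOn g s) :
    CompletelyMonotonicOn f s := by
  have hderiv : EqOn (derivWithin f s) (fun x ↦ -g x) s := fun x hx ↦
    (hfg x hx).hasDerivWithinAt.derivWithin (hs.uniqueDiffOn x hx)
  refine ⟨(contDiffOn_infty_iff_derivWithin hs.uniqueDiffOn).2
    ⟨fun x hx ↦ (hfg x hx).differentiableAt.differentiableWithinAt,
      hg.contDiffOn.neg.congr hderiv⟩, fun n x hx ↦ ?_⟩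
  rcases n with _ | n
  · simpa using hf x hx
  · rw [iteratedDerivWithin_succ', iteratedDerivWithin_congr hderiv hx,
      iteratedDerivWithin_fun_neg, pow_succ]
    linarith [hg.2 n x hx]

lemma antitoneOn (hs : IsOpen s) (hconv : Convex ℝ s) (hf : CompletelyMonotonicOn f s) :
    AntitoneOn f s :=
  antitoneOn_of_deriv_nonpos hconv hf.contDiffOn.continuousOn
    ((hf.contDiffOn.differentiableOn (by simp)).mono interior_subset) fun x hx ↦ by
      rw [← derivWithin_of_isOpen hs (interior_subset hx)]
      exact hf.derivWithin_nonpos (interior_subset hx)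

lemma convexOn (hs : IsOpen s) (hconv : Convex ℝ s) (hf : CompletelyMonotonicOn f s) :
    ConvexOn ℝ s f := by
  have hdiff : DifferentiableOn ℝ f s := hf.contDiffOn.differentiableOn (by simp)
  have hmono : MonotoneOn (deriv f) s := fun x hx y hy hxy ↦ by
    simpa [derivWithin_of_isOpen hs, hx, hy] using
      (hf.neg_derivWithin hs.uniqueDiffOn).antitoneOn hs hconv hx hy hxy
  refine MonotoneOn.convexOn_of_deriv hconv hdiff.continuousOn (hdiff.mono interior_subset) ?_
  rwa [hs.interior_eq]

end CompletelyMonotonicOn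

section PointwiseLimits

variable {ι : Type*} {l : Filter ι} {F : ι → ℝ → ℝ} {f : ℝ → ℝ} {s : Set ℝ}

lemma tendsto_deriv_of_convexOn {x : ℝ} (hs : IsOpen s) (hx : x ∈ s)
    (hconv : ∀ i, ConvexOn ℝ s (F i)) (hF : ∀ i, DifferentiableAt ℝ (F i) x)
    (hf : DifferentiableAt ℝ f x) (hlim : ∀ y ∈ s, Tendsto (F · y) l (𝓝 (f y))) :
    Tendsto (fun i ↦ deriv (F i) x) l (𝓝 (deriv f x)) := by
  have hslope : Tendsto (slope f x) (𝓝[≠] x) (𝓝 (deriv f x)) := hf.hasDerivAt.tendsto_slope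
  have hslope_lim {y : ℝ} (hy : y ∈ s) :
      Tendsto (fun i ↦ slope (F i) x y) l (𝓝 (slope f x y)) := by
    simp only [slope_def_field]
    exact ((hlim y hy).sub (hlim x hx)).div_const _
  refine tendsto_order.2 ⟨fun a ha ↦ ?_, fun b hb ↦ ?_⟩
  · obtain ⟨y, hay, hy, hyx⟩ := (((hslope.mono_left (nhdsLT_le_nhdsNE x)).eventually_const_lt
      ha).and ((eventually_nhdsWithin_of_eventually_nhds (hs.mem_nhds hx)).and
      self_mem_nhdsWithin)).exists
    filter_upwards [(hslope_lim hy).eventually_const_lt hay] with i hi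
    rw [slope_comm] at hi
    exact hi.trans_le ((hconv i).slope_le_of_hasDerivAt hy hx hyx (hF i).hasDerivAt)
  · obtain ⟨y, hyb, hy, hxy⟩ := (((hslope.mono_left (nhdsGT_le_nhdsNE x)).eventually_lt_const
      hb).and ((eventually_nhdsWithin_of_eventually_nhds (hs.mem_nhds hx)).and
      self_mem_nhdsWithin)).exists
    filter_upwards [(hslope_lim hy).eventually_lt_const hyb] with i hi
    exact ((hconv i).le_slope_of_hasDerivAt hx hy hxy (hF i).hasDerivAt).trans_lt hi

lemma CompletelyMonotonicOn.of_tendsto [l.NeBot] (hs : IsOpen s) (hconv : Convex ℝ s)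
    (hF : ∀ i, CompletelyMonotonicOn (F i) s) (hf : ContDiffOn ℝ ∞ f s)
    (hlim : ∀ x ∈ s, Tendsto (F · x) l (𝓝 (f x))) : CompletelyMonotonicOn f s := by
  refine ⟨hf, fun n ↦ ?_⟩
  induction n generalizing F f with
  | zero =>
    intro x hx
    simpa using ge_of_tendsto' (hlim x hx) fun i ↦ (hF i).nonneg hx
  | succ n ih =>
    intro x hx
    have hdiff {g : ℝ → ℝ} (hg : ContDiffOn ℝ ∞ g s) {y : ℝ} (hy : y ∈ s) :
        DifferentiableAt ℝ g y := (hg.contDiffAt (hs.mem_nhds hy)).differentiableAt (by simp)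
    have hderiv_lim (y : ℝ) (hy : y ∈ s) :
        Tendsto (fun i ↦ -derivWithin (F i) s y) l (𝓝 (-derivWithin f s y)) := by
      simp only [derivWithin_of_isOpen hs hy]
      exact (tendsto_deriv_of_convexOn hs hy (fun i ↦ (hF i).convexOn hs hconv)
        (fun i ↦ hdiff (hF i).contDiffOn hy) (hdiff hf hy) hlim).neg
    have hneg := ih (fun i ↦ (hF i).neg_derivWithin hs.uniqueDiffOn)
      ((contDiffOn_infty_iff_derivWithin hs.uniqueDiffOn).1 hf).2.neg hderiv_lim x hx
    rw [iteratedDerivWithin_fun_neg] at hneg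
    rw [iteratedDerivWithin_succ', pow_succ]
    linarith

end PointwiseLimits

namespace CompletelyMonotonicOn

variable {f : ℝ → ℝ} {c : ℝ}

-- `f x - f (x + n)` is a finite sum of shifts of the difference, and it tends to `f x - c`.
lemma of_sub_comp_add_one (hf : ContDiffOn ℝ ∞ f (Ioi 0))
    (hsub : CompletelyMonotonicOn (fun x ↦ f x - f (x + 1)) (Ioi 0))
    (hlim : ∀ x > 0, Tendsto (fun n : ℕ ↦ f (x + n)) atTop (𝓝 c)) (hc : 0 ≤ c) :
    CompletelyMonotonicOn f (Ioi 0) := by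
  have hpartial (n : ℕ) : CompletelyMonotonicOn (fun x ↦ f x - f (x + n) + c) (Ioi 0) := by
    induction n with
    | zero => simpa using const hc
    | succ n ih =>
      have hshift := hsub.comp_add_const (a := n) isOpen_Ioi isOpen_Ioi
        fun x (hx : 0 < x) ↦ add_pos_of_pos_of_nonneg hx n.cast_nonneg
      refine (ih.add isOpen_Ioi.uniqueDiffOn hshift).congr fun x _ ↦ ?_
      push_cast
      rw [add_assoc x]
      ring
  refine of_tendsto (l := atTop) isOpen_Ioi (convex_Ioi 0) hpartial hf fun x hx ↦ ?_
  simpa using ((hlim x hx).const_sub (f x)).add_const c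

end CompletelyMonotonicOn

-- A tangent of positive slope would force a convex function to be unbounded above.
lemma deriv_nonpos_of_convexOn_of_tendsto {f : ℝ → ℝ} {f' a c x : ℝ}
    (hconv : ConvexOn ℝ (Ioi a) f) (hf : HasDerivAt f f' x) (hx : a < x)
    (hlim : Tendsto f atTop (𝓝 c)) : f' ≤ 0 := by
  have hslope : Tendsto (slope f x) atTop (𝓝 0) := by
    refine ((hlim.sub_const (f x)).div_atTop (tendsto_atTop_add_const_right atTop (-x)
      tendsto_id)).congr fun y ↦ ?_
    rw [slope_def_field, id, sub_eq_add_neg y]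
  refine ge_of_tendsto hslope ?_
  filter_upwards [eventually_gt_atTop x] with y hy
  exact hconv.le_slope_of_hasDerivAt hx (hx.trans hy) hy hf

lemma CompletelyMonotonicOn.of_hasDerivAt_hasDerivAt {f f' f'' : ℝ → ℝ} {a c : ℝ}
    (hf : ∀ x ∈ Ioi a, HasDerivAt f (f' x) x) (hf' : ∀ x ∈ Ioi a, HasDerivAt f' (f'' x) x)
    (hf'' : CompletelyMonotonicOn f'' (Ioi a)) (hlim : Tendsto f atTop (𝓝 c)) (hc : 0 ≤ c) :
    CompletelyMonotonicOn f (Ioi a) := by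
  have hcont : ContinuousOn f (Ioi a) := fun x hx ↦ (hf x hx).continuousAt.continuousWithinAt
  have hconv : ConvexOn ℝ (Ioi a) f := by
    refine convexOn_of_hasDerivWithinAt2_nonneg (convex_Ioi a) hcont (f' := f') (f'' := f'')
      ?_ ?_ ?_ <;> rw [interior_Ioi]
    exacts [fun x hx ↦ (hf x hx).hasDerivWithinAt, fun x hx ↦ (hf' x hx).hasDerivWithinAt,
      fun x hx ↦ hf''.nonneg hx]
  have hf'_nonpos : ∀ x ∈ Ioi a, f' x ≤ 0 := fun x hx ↦
    deriv_nonpos_of_convexOn_of_tendsto hconv (hf x hx) hx hlim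
  have hanti : AntitoneOn f (Ioi a) := by
    refine antitoneOn_of_hasDerivWithinAt_nonpos (convex_Ioi a) hcont (f' := f') ?_ ?_ <;>
      rw [interior_Ioi]
    exacts [fun x hx ↦ (hf x hx).hasDerivWithinAt, hf'_nonpos]
  have hf_nonneg : ∀ x ∈ Ioi a, 0 ≤ f x := fun x hx ↦ hc.trans <| by
    refine le_of_tendsto hlim ?_
    filter_upwards [eventually_ge_atTop x] with y hy
    exact hanti hx (hx.trans_le hy) hy
  have hneg_f' : CompletelyMonotonicOn (fun x ↦ -f' x) (Ioi a) :=
    of_hasDerivAt_neg isOpen_Ioi (fun x hx ↦ neg_nonneg.2 (hf'_nonpos x hx))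
      (fun x hx ↦ (hf' x hx).neg) hf''
  exact of_hasDerivAt_neg isOpen_Ioi hf_nonneg (fun x hx ↦ by simpa using hf x hx) hneg_f'

/-- `f` is, on the positive half-line, the Laplace transform of the density `φ` on `(0, ∞)`, with
an absolutely convergent integral. -/
def HasLaplaceTransform (φ f : ℝ → ℝ) : Prop :=
  ∀ x > 0, IntegrableOn (fun t ↦ Real.exp (-(x * t)) * φ t) (Ioi 0) ∧
    ∫ t in Ioi 0, Real.exp (-(x * t)) * φ t = f x

namespace HasLaplaceTransform

variable {φ φ₁ φ₂ f f₁ f₂ : ℝ → ℝ}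

lemma add (h₁ : HasLaplaceTransform φ₁ f₁) (h₂ : HasLaplaceTransform φ₂ f₂) :
    HasLaplaceTransform (fun t ↦ φ₁ t + φ₂ t) (fun x ↦ f₁ x + f₂ x) := fun x hx ↦ by
  simp only [mul_add]
  exact ⟨(h₁ x hx).1.add (h₂ x hx).1, by
    rw [integral_add (h₁ x hx).1 (h₂ x hx).1, (h₁ x hx).2, (h₂ x hx).2]⟩

lemma const_mul (c : ℝ) (h : HasLaplaceTransform φ f) :
    HasLaplaceTransform (fun t ↦ c * φ t) (fun x ↦ c * f x) := fun x hx ↦ by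
  simp only [mul_left_comm _ c]
  exact ⟨(h x hx).1.const_mul c, by rw [integral_const_mul, (h x hx).2]⟩

lemma sum {ι : Type*} (u : Finset ι) {φ f : ι → ℝ → ℝ}
    (h : ∀ i ∈ u, HasLaplaceTransform (φ i) (f i)) :
    HasLaplaceTransform (fun t ↦ ∑ i ∈ u, φ i t) (fun x ↦ ∑ i ∈ u, f i x) := fun x hx ↦ by
  simp only [Finset.mul_sum]
  exact ⟨integrable_finsetSum _ fun i hi ↦ (h i hi x hx).1, by
    rw [integral_finsetSum _ fun i hi ↦ (h i hi x hx).1]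
    exact Finset.sum_congr rfl fun i hi ↦ (h i hi x hx).2⟩

end HasLaplaceTransform

lemma completelyMonotonicOn_mgf_neg {Ω : Type*} {m : MeasurableSpace Ω} {μ : Measure Ω}
    {X : Ω → ℝ} (hX : 0 ≤ᵐ[μ] X) (hint : Iio 0 ⊆ integrableExpSet X μ) :
    CompletelyMonotonicOn (fun x ↦ mgf X μ (-x)) (Ioi 0) := by
  have hmem {x : ℝ} (hx : 0 < x) : -x ∈ interior (integrableExpSet X μ) :=
    interior_maximal hint isOpen_Iio (neg_lt_zero.2 hx)
  refine ⟨fun x hx ↦ ?_, fun n x hx ↦ ?_⟩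
  · exact ((analyticAt_mgf (hmem hx)).contDiffAt.comp x contDiffAt_id.neg).contDiffWithinAt
  · rw [iteratedDerivWithin_of_isOpen isOpen_Ioi hx, iteratedDeriv_comp_neg,
      iteratedDeriv_mgf (hmem hx), smul_eq_mul, ← mul_assoc, ← mul_pow, neg_one_mul, neg_neg,
      one_pow, one_mul]
    refine integral_nonneg_of_ae ?_
    filter_upwards [hX] with w hw
    exact mul_nonneg (pow_nonneg hw n) (Real.exp_nonneg _)

lemma HasLaplaceTransform.completelyMonotonicOn {φ f : ℝ → ℝ} (h : HasLaplaceTransform φ f)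
    (hφ : ∀ t > 0, 0 ≤ φ t) : CompletelyMonotonicOn f (Ioi 0) := by
  have hmeas : AEMeasurable φ (volume.restrict (Ioi 0)) := by
    have hexp : Measurable fun t : ℝ ↦ Real.exp (1 * t) := by fun_prop
    refine (hexp.aemeasurable.mul (h 1 one_pos).1.aemeasurable).congr (.of_forall fun t ↦ ?_)
    simp only [Pi.mul_apply, ← mul_assoc, ← Real.exp_add, add_neg_cancel, Real.exp_zero, one_mul]
  let μ : Measure ℝ := (volume.restrict (Ioi 0)).withDensity fun t ↦ (φ t).toNNReal
  have hdens (x : ℝ) : (fun t ↦ (φ t).toNNReal • Real.exp (-x * id t)) =ᵐ[volume.restrict (Ioi 0)]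
      fun t ↦ Real.exp (-(x * t)) * φ t := by
    filter_upwards [ae_restrict_mem measurableSet_Ioi] with t ht
    rw [NNReal.smul_def, Real.coe_toNNReal _ (hφ t ht), smul_eq_mul, mul_comm, neg_mul, id]
  have hint : Iio 0 ⊆ integrableExpSet id μ := fun x hx ↦ by
    have hx' := (h (-x) (neg_pos.2 hx)).1.congr (hdens (-x)).symm
    rw [neg_neg] at hx'
    exact (integrable_withDensity_iff_integrable_smul₀ hmeas.real_toNNReal).2 hx'
  have hpos : 0 ≤ᵐ[μ] id := by
    refine (withDensity_absolutelyContinuous _ _).ae_le ?_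
    filter_upwards [ae_restrict_mem measurableSet_Ioi] with t ht using le_of_lt ht
  refine (completelyMonotonicOn_mgf_neg hpos hint).congr fun x hx ↦ ?_
  change f x = ∫ t, Real.exp (-x * id t) ∂μ
  rw [integral_withDensity_eq_integral_smul₀ hmeas.real_toNNReal,
    integral_congr_ae (hdens x), (h x hx).2]

open scoped Nat in
lemma hasLaplaceTransform_pow_mul_exp (n : ℕ) {a : ℝ} (ha : 0 ≤ a) :
    HasLaplaceTransform (fun t ↦ t ^ n * Real.exp (-(a * t)))
      (fun x ↦ n ! / (x + a) ^ (n + 1)) := fun x hx ↦ by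
  have hxa : 0 < x + a := by positivity
  have hintegral : ∫ t in Ioi 0, Real.exp (-(x * t)) * (t ^ n * Real.exp (-(a * t))) =
      n ! / (x + a) ^ (n + 1) := by
    have hGamma := Real.integral_rpow_mul_exp_neg_mul_Ioi (a := n + 1) (by positivity) hxa
    rw [Real.Gamma_nat_eq_factorial, ← Nat.cast_add_one, Real.rpow_natCast] at hGamma
    rw [one_div, inv_pow, mul_comm, ← div_eq_mul_inv] at hGamma
    rw [← hGamma]
    congr with t
    rw [Nat.cast_add_one, add_sub_cancel_right, Real.rpow_natCast, mul_left_comm, ← Real.exp_add]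
    ring_nf
  -- A nonzero Bochner integral is the integral of an integrable function.
  exact ⟨Integrable.of_integral_ne_zero (hintegral ▸ by positivity), hintegral⟩

open scoped Nat in
lemma hasLaplaceTransform_sum_mul_exp {n : ℕ} (c : Fin n → ℝ) {a : ℝ} (ha : 0 ≤ a) :
    HasLaplaceTransform (fun t ↦ (∑ i, c i * t ^ (i : ℕ)) * Real.exp (-(a * t)))
      (fun x ↦ ∑ i, c i * ((i : ℕ)! / (x + a) ^ (i + 1 : ℕ))) := by
  simp only [Finset.sum_mul, mul_assoc]
  exact .sum _ fun i _ ↦ (hasLaplaceTransform_pow_mul_exp i ha).const_mul (c i)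

lemma nonneg_of_hasDerivAt_nonneg {f f' : ℝ → ℝ} (hf : ∀ t, HasDerivAt f (f' t) t)
    (h₀ : 0 ≤ f 0) (hf' : ∀ t ≥ 0, 0 ≤ f' t) : ∀ t ≥ 0, 0 ≤ f t := fun _ ht ↦
  h₀.trans <| monotoneOn_of_hasDerivWithinAt_nonneg (convex_Ici 0)
    (fun x _ ↦ (hf x).continuousAt.continuousWithinAt) (fun x _ ↦ (hf x).hasDerivWithinAt)
    (fun x hx ↦ hf' x (interior_subset hx)) self_mem_Ici ht ht

section ExponentialPolynomials

open Polynomial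

/-- The exponential polynomial `A(t) eᵗ + B(t) + C(t) e⁻ᵗ`. -/
noncomputable def expPoly (A B C : ℝ[X]) (t : ℝ) : ℝ :=
  A.eval t * Real.exp t + B.eval t + C.eval t * Real.exp (-t)

lemma hasDerivAt_expPoly (A B C : ℝ[X]) (t : ℝ) :
    HasDerivAt (expPoly A B C)
      (expPoly (A + derivative A) (derivative B) (derivative C - C) t) t := by
  convert! ((((A.hasDerivAt t).mul (Real.hasDerivAt_exp t)).add (B.hasDerivAt t)).add
    ((C.hasDerivAt t).mul (hasDerivAt_neg t).exp)) using 1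
  simp only [expPoly, eval_add, eval_sub]
  ring

lemma expPoly_nonneg_of_derivative {A B C : ℝ[X]} (h₀ : 0 ≤ A.eval 0 + B.eval 0 + C.eval 0)
    (h : ∀ t ≥ 0, 0 ≤ expPoly (A + derivative A) (derivative B) (derivative C - C) t) :
    ∀ t ≥ 0, 0 ≤ expPoly A B C t :=
  nonneg_of_hasDerivAt_nonneg (hasDerivAt_expPoly A B C) (by simpa [expPoly] using h₀) h

end ExponentialPolynomials

section ElementaryFunctions

variable {x d : ℝ}

lemma hasDerivAt_div_add_pow (c : ℝ) (n : ℕ) (hx : x + d ≠ 0) :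
    HasDerivAt (fun y ↦ c / (y + d) ^ n) (-(n * c) / (x + d) ^ (n + 1)) x := by
  refine ((hasDerivAt_const x c).fun_div (((hasDerivAt_id x).add_const d).fun_pow n)
    (pow_ne_zero n hx)).congr_deriv ?_
  rcases n with _ | n
  · simp
  · simp only [id, add_tsub_cancel_right]
    field_simp
    ring

lemma hasDerivAt_const_mul_log_add (c : ℝ) (hx : x + d ≠ 0) :
    HasDerivAt (fun y ↦ c * Real.log (y + d)) (c / (x + d)) x := by
  simpa [div_eq_mul_inv] using (((hasDerivAt_id x).add_const d).log hx).const_mul c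

lemma hasDerivAt_linear_mul_log_add (a b : ℝ) (hx : x + d ≠ 0) :
    HasDerivAt (fun y ↦ (a * y + b) * Real.log (y + d))
      (a * Real.log (x + d) + (a + (b - a * d) / (x + d))) x := by
  refine ((((hasDerivAt_id x).const_mul a).add_const b).fun_mul
    (((hasDerivAt_id x).add_const d).log hx)).congr_deriv ?_
  simp only [id]
  field_simp
  ring

lemma tendsto_linear_mul_log_add_sub_log (a b d : ℝ) :
    Tendsto (fun y ↦ (a * y + b) * (Real.log (y + d) - Real.log y)) atTop (𝓝 (a * d)) := by
  have hlog : Tendsto (fun y : ℝ ↦ Real.log (1 + d / y)) atTop (𝓝 0) := by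
    have h : Tendsto (fun y : ℝ ↦ 1 + d / y) atTop (𝓝 1) := by
      simpa using ((tendsto_const_nhds (x := d)).div_atTop tendsto_id).const_add 1
    simpa using h.log one_ne_zero
  have hsum := ((Real.tendsto_mul_log_one_add_div_atTop d).const_mul a).add (hlog.const_mul b)
  rw [mul_zero, add_zero] at hsum
  refine hsum.congr' ?_
  filter_upwards [eventually_gt_atTop 0, eventually_gt_atTop (-d)] with y hy hyd
  rw [← Real.log_div (by linarith) hy.ne', add_div, div_self hy.ne']
  ring

lemma tendsto_div_add_pow_atTop (c d : ℝ) {n : ℕ} (hn : n ≠ 0) :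
    Tendsto (fun y ↦ c / (y + d) ^ n) atTop (𝓝 0) :=
  tendsto_const_nhds.div_atTop
    ((tendsto_pow_atTop hn).comp (tendsto_atTop_add_const_right _ d tendsto_id))

end ElementaryFunctions

/-- The function `κ` with `G_λ = G_0 - (λ / 24) κ`. -/
noncomputable def kappa (x : ℝ) : ℝ :=
  x * Real.log x - (9 * x + 12) * Real.log (x + 1) + (8 * x + 12) * Real.log (x + 2) -
    1 / 2 / (x + 1)

/-- The derivative of `kappa` on the positive half-line. -/
noncomputable def kappaDeriv (x : ℝ) : ℝ :=
  Real.log x - 9 * Real.log (x + 1) + 8 * Real.log (x + 2) - 3 / (x + 1) - 4 / (x + 2) +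
    1 / 2 / (x + 1) ^ 2

lemma G_eq_G_zero_add_kappa (lam x : ℝ) : G lam x = G 0 x + -lam / 24 * kappa x := by
  unfold G H kappa
  simp only [div_mul_eq_div_div]
  ring

lemma hasDerivAt_kappa {x : ℝ} (hx : 0 < x) : HasDerivAt kappa (kappaDeriv x) x := by
  convert! (((hasDerivAt_linear_mul_log_add (d := 0) 1 0 (by positivity)).add
    (hasDerivAt_linear_mul_log_add (d := 1) (-9) (-12) (by positivity))).add
    (hasDerivAt_linear_mul_log_add (d := 2) 8 12 (by positivity))).add
    (hasDerivAt_div_add_pow (d := 1) (-1 / 2) 1 (by positivity)) using 1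
  · ext y
    simp only [kappa, Pi.add_apply, add_zero]
    ring
  · simp only [kappaDeriv, add_zero]
    ring

lemma hasDerivAt_kappaDeriv {x : ℝ} (hx : 0 < x) :
    HasDerivAt kappaDeriv (1 / x - 9 / (x + 1) + 3 / (x + 1) ^ 2 - 1 / (x + 1) ^ 3 +
      8 / (x + 2) + 4 / (x + 2) ^ 2) x := by
  convert! (((((hasDerivAt_const_mul_log_add (d := 0) 1 (by positivity)).add
    (hasDerivAt_const_mul_log_add (d := 1) (-9) (by positivity))).add
    (hasDerivAt_const_mul_log_add (d := 2) 8 (by positivity))).add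
    (hasDerivAt_div_add_pow (d := 1) (-3) 1 (by positivity))).add
    (hasDerivAt_div_add_pow (d := 2) (-4) 1 (by positivity))).add
    (hasDerivAt_div_add_pow (d := 1) (1 / 2) 2 (by positivity)) using 1
  · ext y
    simp only [kappaDeriv, Pi.add_apply, add_zero]
    ring
  · simp only [add_zero]
    ring

lemma hasLaplaceTransform_kappa_second_deriv :
    HasLaplaceTransform
      (fun t ↦ 1 + (-9 + 3 * t - t ^ 2 / 2) * Real.exp (-t) + (8 + 4 * t) * Real.exp (-(2 * t)))
      (fun x ↦ 1 / x - 9 / (x + 1) + 3 / (x + 1) ^ 2 - 1 / (x + 1) ^ 3 +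
        8 / (x + 2) + 4 / (x + 2) ^ 2) := by
  convert! ((hasLaplaceTransform_sum_mul_exp ![1] le_rfl).add
    (hasLaplaceTransform_sum_mul_exp ![-9, 3, -1 / 2] zero_le_one)).add
    (hasLaplaceTransform_sum_mul_exp ![8, 4] zero_le_two) using 2 with t x
  all_goals
    simp only [Fin.sum_univ_one, Fin.sum_univ_two, Fin.sum_univ_three, Matrix.cons_val,
      Fin.coe_ofNat_eq_mod, Nat.factorial, zero_mul, neg_zero, Real.exp_zero]
    push_cast
    ring_nf

open Polynomial in
lemma kappa_kernel_nonneg {t : ℝ} (ht : 0 ≤ t) :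
    0 ≤ Real.exp t + (-9 + 3 * t - t ^ 2 / 2) + (8 + 4 * t) * Real.exp (-t) := by
  have h : ∀ t ≥ 0, 0 ≤ expPoly 1 (-9 + 3 * X - C (1 / 2) * X ^ 2) (8 + 4 * X) t := by
    refine expPoly_nonneg_of_derivative (by norm_num) <|
      expPoly_nonneg_of_derivative (by norm_num) fun t ht ↦ ?_
    have hexp : 0 ≤ Real.exp t - 1 + 4 * t * Real.exp (-t) :=
      add_nonneg (sub_nonneg.2 (Real.one_le_exp ht)) (by positivity)
    convert! hexp using 1
    simp [expPoly]
    ring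
  simpa [expPoly, div_eq_inv_mul] using h t ht

lemma kappa_density_nonneg {t : ℝ} (ht : 0 ≤ t) :
    0 ≤ 1 + (-9 + 3 * t - t ^ 2 / 2) * Real.exp (-t) + (8 + 4 * t) * Real.exp (-(2 * t)) := by
  refine (mul_nonneg (Real.exp_nonneg (-t)) (kappa_kernel_nonneg ht)).trans_eq ?_
  rw [two_mul, neg_add, Real.exp_add, Real.exp_neg]
  field_simp

lemma tendsto_kappa_atTop : Tendsto kappa atTop (𝓝 7) := by
  have h := ((tendsto_linear_mul_log_add_sub_log (-9) (-12) 1).add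
    (tendsto_linear_mul_log_add_sub_log 8 12 2)).add
    (tendsto_div_add_pow_atTop (-1 / 2) 1 one_ne_zero)
  norm_num at h
  refine h.congr fun x ↦ ?_
  simp only [kappa]
  ring_nf

lemma completelyMonotonicOn_kappa : CompletelyMonotonicOn kappa (Ioi 0) :=
  .of_hasDerivAt_hasDerivAt (fun _ ↦ hasDerivAt_kappa) (fun _ ↦ hasDerivAt_kappaDeriv)
    (hasLaplaceTransform_kappa_second_deriv.completelyMonotonicOn fun _ ht ↦
      kappa_density_nonneg (le_of_lt ht)) tendsto_kappa_atTop (by norm_num)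

lemma log_Gamma_add_one {x : ℝ} (hx : 0 < x) :
    Real.log (Real.Gamma (x + 1)) = Real.log (Real.Gamma x) + Real.log x := by
  rw [Real.Gamma_add_one hx.ne', Real.log_mul hx.ne' (Real.Gamma_pos_of_pos hx).ne', add_comm]

/-- The elementary function equal to `x ↦ G_0(x) - G_0(x + 1)` on the positive half-line. -/
noncomputable def decrement (x : ℝ) : ℝ :=
  -1 + 1 / 12 / (x + 1) ^ 2 - 1 / 12 / (x + 2) ^ 2 - 1 / (x + 1) + 1 / (x + 2) -
    (43 * x + 70) / 6 * Real.log (x + 1) + (80 * x + 168) / 6 * Real.log (x + 2) -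
    (37 * x + 98) / 6 * Real.log (x + 3)

/-- The derivative of `decrement` on the positive half-line. -/
noncomputable def decrementDeriv (x : ℝ) : ℝ :=
  (-43 * Real.log (x + 1) + 80 * Real.log (x + 2) - 37 * Real.log (x + 3)) / 6 -
    9 / 2 / (x + 1) + 4 / 3 / (x + 2) + 13 / 6 / (x + 3) + 1 / (x + 1) ^ 2 -
    1 / (x + 2) ^ 2 - 1 / 6 / (x + 1) ^ 3 + 1 / 6 / (x + 2) ^ 3

lemma G_zero_sub_G_zero_add_one {x : ℝ} (hx : 0 < x) : G 0 x - G 0 (x + 1) = decrement x := by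
  unfold G H decrement
  simp only [log_Gamma_add_one hx, div_mul_eq_div_div]
  ring_nf

lemma hasDerivAt_decrement {x : ℝ} (hx : 0 < x) :
    HasDerivAt decrement (decrementDeriv x) x := by
  convert! ((((((hasDerivAt_div_add_pow (d := 1) (1 / 12) 2 (by positivity)).add
    (hasDerivAt_div_add_pow (d := 2) (-1 / 12) 2 (by positivity))).add
    (hasDerivAt_div_add_pow (d := 1) (-1) 1 (by positivity))).add
    (hasDerivAt_div_add_pow (d := 2) 1 1 (by positivity))).add
    (hasDerivAt_linear_mul_log_add (d := 1) (-43 / 6) (-70 / 6) (by positivity))).add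
    (hasDerivAt_linear_mul_log_add (d := 2) (80 / 6) (168 / 6) (by positivity))).add
    (hasDerivAt_linear_mul_log_add (d := 3) (-37 / 6) (-98 / 6) (by positivity)) |>.const_add
    (-1) using 1
  · ext y
    simp only [decrement, Pi.add_apply]
    ring
  · simp only [decrementDeriv]
    ring

lemma hasDerivAt_decrementDeriv {x : ℝ} (hx : 0 < x) :
    HasDerivAt decrementDeriv
      (-43 / 6 / (x + 1) + 9 / 2 / (x + 1) ^ 2 - 2 / (x + 1) ^ 3 + 1 / 2 / (x + 1) ^ 4 +
        40 / 3 / (x + 2) - 4 / 3 / (x + 2) ^ 2 + 2 / (x + 2) ^ 3 - 1 / 2 / (x + 2) ^ 4 -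
        37 / 6 / (x + 3) - 13 / 6 / (x + 3) ^ 2) x := by
  convert! (((((((((hasDerivAt_const_mul_log_add (d := 1) (-43 / 6) (by positivity)).add
    (hasDerivAt_const_mul_log_add (d := 2) (80 / 6) (by positivity))).add
    (hasDerivAt_const_mul_log_add (d := 3) (-37 / 6) (by positivity))).add
    (hasDerivAt_div_add_pow (d := 1) (-9 / 2) 1 (by positivity))).add
    (hasDerivAt_div_add_pow (d := 2) (4 / 3) 1 (by positivity))).add
    (hasDerivAt_div_add_pow (d := 3) (13 / 6) 1 (by positivity))).add
    (hasDerivAt_div_add_pow (d := 1) 1 2 (by positivity))).add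
    (hasDerivAt_div_add_pow (d := 2) (-1) 2 (by positivity))).add
    (hasDerivAt_div_add_pow (d := 1) (-1 / 6) 3 (by positivity))).add
    (hasDerivAt_div_add_pow (d := 2) (1 / 6) 3 (by positivity)) using 1
  · ext y
    simp only [decrementDeriv, Pi.add_apply]
    ring
  · ring

lemma hasLaplaceTransform_decrement_second_deriv :
    HasLaplaceTransform
      (fun t ↦ ((-86 + 54 * t - 12 * t ^ 2 + t ^ 3) * Real.exp (-t) +
        (160 - 16 * t + 12 * t ^ 2 - t ^ 3) * Real.exp (-(2 * t)) +
        (-74 - 26 * t) * Real.exp (-(3 * t))) / 12)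
      (fun x ↦ -43 / 6 / (x + 1) + 9 / 2 / (x + 1) ^ 2 - 2 / (x + 1) ^ 3 +
        1 / 2 / (x + 1) ^ 4 + 40 / 3 / (x + 2) - 4 / 3 / (x + 2) ^ 2 + 2 / (x + 2) ^ 3 -
        1 / 2 / (x + 2) ^ 4 - 37 / 6 / (x + 3) - 13 / 6 / (x + 3) ^ 2) := by
  convert! (((hasLaplaceTransform_sum_mul_exp ![-86, 54, -12, 1] zero_le_one).add
    (hasLaplaceTransform_sum_mul_exp ![160, -16, 12, -1] zero_le_two)).add
    (hasLaplaceTransform_sum_mul_exp ![-74, -26] zero_le_three)).const_mul (1 / 12)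
    using 2 with t x
  all_goals
    simp only [Fin.sum_univ_two, Fin.sum_univ_four, Matrix.cons_val,
      Fin.coe_ofNat_eq_mod, Nat.factorial]
    push_cast
    ring_nf

open Polynomial in
lemma decrement_kernel_nonneg {t : ℝ} (ht : 0 ≤ t) :
    0 ≤ (-86 + 54 * t - 12 * t ^ 2 + t ^ 3) * Real.exp t + (160 - 16 * t + 12 * t ^ 2 - t ^ 3) +
      (-74 - 26 * t) * Real.exp (-t) := by
  have h : ∀ t ≥ 0, 0 ≤ expPoly (-86 + 54 * X - 12 * X ^ 2 + X ^ 3)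
      (160 - 16 * X + 12 * X ^ 2 - X ^ 3) (-74 - 26 * X) t := by
    refine expPoly_nonneg_of_derivative (by norm_num) <|
      expPoly_nonneg_of_derivative (by norm_num) <|
      expPoly_nonneg_of_derivative (by norm_num) <|
      expPoly_nonneg_of_derivative (by norm_num) fun t ht ↦ ?_
    have hexp : 0 ≤ (10 - 6 * t + t ^ 3) * Real.exp t + (30 - 26 * t) * Real.exp (-t) := by
      have hcubic : 0 ≤ 10 - 6 * t + t ^ 3 := by
        nlinarith [mul_nonneg (add_nonneg ht zero_le_three) (sq_nonneg (t - 3 / 2))]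
      have hquartic : 0 ≤ (10 - 6 * t + t ^ 3) * (2 * t + 1) + (30 - 26 * t) := by
        nlinarith [mul_nonneg ht (sq_nonneg (t - 2)), sq_nonneg (t ^ 2 - 4), sq_nonneg (t - 1)]
      calc 0 ≤ ((10 - 6 * t + t ^ 3) * Real.exp (2 * t) + (30 - 26 * t)) * Real.exp (-t) := by
            refine mul_nonneg (hquartic.trans ?_) (Real.exp_nonneg _)
            gcongr
            exact Real.add_one_le_exp _
        _ = _ := by
            rw [add_mul, mul_assoc, ← Real.exp_add]
            ring_nf
    convert! hexp using 1
    simp [expPoly]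
    ring
  simpa [expPoly] using h t ht

lemma decrement_density_nonneg {t : ℝ} (ht : 0 ≤ t) :
    0 ≤ ((-86 + 54 * t - 12 * t ^ 2 + t ^ 3) * Real.exp (-t) +
      (160 - 16 * t + 12 * t ^ 2 - t ^ 3) * Real.exp (-(2 * t)) +
      (-74 - 26 * t) * Real.exp (-(3 * t))) / 12 := by
  refine div_nonneg ((mul_nonneg (Real.exp_nonneg (-(2 * t)))
    (decrement_kernel_nonneg ht)).trans_eq ?_) (by norm_num)
  rw [show -(3 * t) = -(2 * t) + -t by ring, Real.exp_add _ (-t), two_mul, neg_add,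
    Real.exp_add, Real.exp_neg]
  field_simp

lemma tendsto_decrement_atTop : Tendsto decrement atTop (𝓝 0) := by
  have h := ((((((tendsto_div_add_pow_atTop (1 / 12) 1 two_ne_zero).add
    (tendsto_div_add_pow_atTop (-1 / 12) 2 two_ne_zero)).add
    (tendsto_div_add_pow_atTop (-1) 1 one_ne_zero)).add
    (tendsto_div_add_pow_atTop 1 2 one_ne_zero)).add
    (tendsto_linear_mul_log_add_sub_log (-43 / 6) (-70 / 6) 1)).add
    (tendsto_linear_mul_log_add_sub_log (80 / 6) (168 / 6) 2)).add
    (tendsto_linear_mul_log_add_sub_log (-37 / 6) (-98 / 6) 3) |>.const_add (-1)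
  norm_num at h
  refine h.congr fun x ↦ ?_
  simp only [decrement]
  ring_nf

lemma completelyMonotonicOn_decrement : CompletelyMonotonicOn decrement (Ioi 0) :=
  .of_hasDerivAt_hasDerivAt (fun _ ↦ hasDerivAt_decrement) (fun _ ↦ hasDerivAt_decrementDeriv)
    (hasLaplaceTransform_decrement_second_deriv.completelyMonotonicOn fun _ ht ↦
      decrement_density_nonneg (le_of_lt ht)) tendsto_decrement_atTop le_rfl

lemma contDiffOn_log_Gamma : ContDiffOn ℝ ∞ (fun x ↦ Real.log (Real.Gamma x)) (Ioi 0) := by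
  have hre : IsOpen {z : ℂ | 0 < z.re} := isOpen_lt continuous_const Complex.continuous_re
  have hGamma : DifferentiableOn ℂ Complex.Gamma {z | 0 < z.re} := fun z hz ↦
    (Complex.differentiableAt_Gamma z fun m hm ↦ by
      have : z.re = -m := by simp [hm]
      linarith [hz.out, m.cast_nonneg (α := ℝ)]).differentiableWithinAt
  intro x hx
  have hx' : (x : ℂ) ∈ {z : ℂ | 0 < z.re} := by simpa using hx
  exact ((hGamma.contDiffOn hre _ hx').contDiffAt (hre.mem_nhds hx')).real_of_complex.log
    (Real.Gamma_pos_of_pos hx).ne' |>.contDiffWithinAt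

lemma contDiffOn_G_zero : ContDiffOn ℝ ∞ (G 0) (Ioi 0) := by
  intro x (hx : 0 < x)
  have hGamma : ContDiffAt ℝ ∞ (fun x ↦ Real.log (Real.Gamma x)) x :=
    contDiffOn_log_Gamma.contDiffAt (Ioi_mem_nhds hx)
  refine ContDiffAt.contDiffWithinAt ?_
  unfold G H
  fun_prop (disch := positivity)

lemma tendsto_log_Gamma_add_nat {x : ℝ} (hx : 0 < x) :
    Tendsto (fun n : ℕ ↦ Real.log (Real.Gamma (x + n)) -
      ((x + n - 1 / 2) * Real.log (x + n) - (x + n))) atTop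
      (𝓝 (Real.log √Real.pi + Real.log 2 / 2)) := by
  have hGauss := (Real.BohrMollerup.tendsto_log_gamma hx).const_sub (Real.log (Real.Gamma x))
  have hStirling := Stirling.tendsto_stirlingSeq_sqrt_pi.log (by positivity)
  have hshift := (tendsto_linear_mul_log_add_sub_log 1 (x + 1 / 2) x).comp
    tendsto_natCast_atTop_atTop
  have h := ((hGauss.add (hStirling.add_const (Real.log 2 / 2))).sub hshift).add_const x
  rw [sub_self, zero_add, one_mul, sub_add_cancel] at h
  refine h.congr' ?_
  filter_upwards [eventually_gt_atTop 0] with n hn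
  have hn' : (0 : ℝ) < n := mod_cast hn
  have hsum := Real.BohrMollerup.f_add_nat_eq (f := fun y ↦ Real.log (Real.Gamma y))
    log_Gamma_add_one hx n
  simp only [Function.comp_apply]
  rw [Real.BohrMollerup.logGammaSeq, Finset.sum_range_succ, Stirling.log_stirlingSeq_formula, hsum,
    Real.log_mul two_ne_zero hn'.ne', Real.log_div hn'.ne' (Real.exp_ne_zero 1), Real.log_exp,
    add_comm (n : ℝ) x]
  ring

lemma tendsto_G_zero_sub_stirling :
    Tendsto (fun y ↦ G 0 y - (Real.log (Real.Gamma y) - ((y - 1 / 2) * Real.log y - y))) atTop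
      (𝓝 (31 / 6)) := by
  have h := (((tendsto_div_add_pow_atTop (1 / 12) 1 two_ne_zero).add
    (tendsto_div_add_pow_atTop (-1) 1 one_ne_zero)).add
    (tendsto_linear_mul_log_add_sub_log (-43 / 6) (-64 / 6) 1)).add
    (tendsto_linear_mul_log_add_sub_log (37 / 6) (61 / 6) 2)
  norm_num at h
  refine h.congr fun x ↦ ?_
  simp only [G, H, div_mul_eq_div_div]
  ring_nf

lemma tendsto_G_zero_add_nat {x : ℝ} (hx : 0 < x) :
    Tendsto (fun n : ℕ ↦ G 0 (x + n)) atTop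
      (𝓝 (31 / 6 + (Real.log √Real.pi + Real.log 2 / 2))) := by
  have hshift : Tendsto (fun n : ℕ ↦ x + n) atTop atTop :=
    tendsto_atTop_add_const_left _ x tendsto_natCast_atTop_atTop
  exact ((tendsto_G_zero_sub_stirling.comp hshift).add (tendsto_log_Gamma_add_nat hx)).congr
    fun n ↦ sub_add_cancel _ _

lemma completelyMonotonicOn_G_zero : CompletelyMonotonicOn (G 0) (Ioi 0) := by
  refine .of_sub_comp_add_one contDiffOn_G_zero
    (completelyMonotonicOn_decrement.congr fun _ ↦ G_zero_sub_G_zero_add_one)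
    (fun _ ↦ tendsto_G_zero_add_nat) ?_
  have hpi : 0 ≤ Real.log √Real.pi :=
    Real.log_nonneg (Real.one_le_sqrt.2 (by linarith [Real.pi_gt_three]))
  positivity

lemma nonneg_of_antitoneOn_add_mul_log {f h : ℝ → ℝ} {c : ℝ} (hf : AntitoneOn f (Ioi 0))
    (hh : DifferentiableAt ℝ h 0) (hfh : ∀ x > 0, f x = h x + c * (x * Real.log x)) : 0 ≤ c := by
  have hlim : Tendsto f (𝓝[>] 0) (𝓝 (h 0)) := by
    have hcont : ContinuousAt (fun x ↦ h x + c * (x * Real.log x)) 0 :=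
      hh.continuousAt.add (Real.continuous_mul_log.continuousAt.const_mul c)
    refine Tendsto.congr' (eventually_nhdsWithin_of_forall fun x hx ↦ (hfh x hx).symm) ?_
    simpa using hcont.tendsto.mono_left nhdsWithin_le_nhds
  have hle : ∀ x > 0, f x ≤ h 0 := fun x hx ↦ ge_of_tendsto hlim <| by
    filter_upwards [Ioo_mem_nhdsGT hx] with y hy
    exact hf hy.1 hx hy.2.le
  have hslope_le : ∀ x > 0, slope h 0 x + c * Real.log x ≤ 0 := fun x hx ↦ by
    have heq : slope h 0 x + c * Real.log x = (f x - h 0) / x := by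
      rw [hfh x hx, slope_def_field, sub_zero]
      field_simp
      ring
    exact heq ▸ div_nonpos_of_nonpos_of_nonneg (sub_nonpos.2 (hle x hx)) hx.le
  by_contra! hc
  have hslope : Tendsto (slope h 0) (𝓝[>] 0) (𝓝 (deriv h 0)) :=
    hh.hasDerivAt.tendsto_slope.mono_left (nhdsGT_le_nhdsNE 0)
  have htop := hslope.add_atTop (Real.tendsto_log_nhdsGT_zero.const_mul_atBot_of_neg hc)
  obtain ⟨x, hx_pos, hx⟩ := ((htop.eventually_gt_atTop 0).and self_mem_nhdsWithin).exists
  exact (hslope_le x hx).not_gt hx_pos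

lemma exists_differentiableAt_G_eq_add_mul_log (lam : ℝ) :
    ∃ h : ℝ → ℝ, DifferentiableAt ℝ h 0 ∧
      ∀ x > 0, G lam x = h x + -lam / 24 * (x * Real.log x) := by
  refine ⟨fun x ↦ Real.log (Real.Gamma (x + 1)) + x + 1 / (12 * (1 + x) ^ 2) +
    (lam - 48) / (48 * (1 + x)) + (((9 * lam - 172) * x + 12 * lam - 256) * Real.log (x + 1) +
      4 * ((37 - 2 * lam) * x - 3 * lam + 61) * Real.log (x + 2)) / 24, ?_, fun x hx ↦ ?_⟩
  · have hGamma : DifferentiableAt ℝ (fun x ↦ Real.log (Real.Gamma (x + 1))) 0 := by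
      have hone : DifferentiableAt ℝ Real.Gamma (0 + 1) :=
        Real.differentiableAt_Gamma fun m ↦ ne_of_gt <| by
          linarith [m.cast_nonneg (α := ℝ)]
      exact (hone.comp 0 (differentiableAt_id.add_const 1)).log (by simp)
    fun_prop (disch := norm_num)
  · simp only [G, H, log_Gamma_add_one hx]
    ring

theorem stmt_8 (lam : ℝ) :
    CompletelyMonotonicOn (G lam) (Set.Ioi 0) ↔ lam ≤ 0 := by
  constructor
  · intro hG
    obtain ⟨h, hh, hGh⟩ := exists_differentiableAt_G_eq_add_mul_log lam
    have hcoeff : 0 ≤ -lam / 24 :=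
      nonneg_of_antitoneOn_add_mul_log (hG.antitoneOn isOpen_Ioi (convex_Ioi 0)) hh hGh
    linarith
  · intro hlam
    have hkappa := completelyMonotonicOn_kappa.const_mul (c := -lam / 24) (by linarith)
    exact (completelyMonotonicOn_G_zero.add isOpen_Ioi.uniqueDiffOn hkappa).congr
      fun x _ ↦ G_eq_G_zero_add_kappa lam x
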